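/- Let k be a field, d an even integer with d ≥ 2, and m an integer with d+1 < m; set a = (d+2)/2, R = k[x_1,…,x_m], and M = R/(I_{a,1,m−1} + I_{a,2,m}) (the Stanley–Reisner ring k[Δ(d,m)]). Then b_0(M) = 1, b_{m−d}(M) = 1, b_i(M) = 0 for i > m−d, and for every i with 1 ≤ i ≤ m−d−1, b_i(M) = η(d+1, m+1, i) + η(d+1, m+1, m−d−i), i.e. b_i(M) = C(m−d/2−1, d/2+i)·C(d/2+i−1, d/2) + C(m−d/2−1, m−d/2−i)·C(m−d/2−i−1, d/2). -/

import Mathlib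

/-- The variable `x_t` (1-indexed, for `1 ≤ t ≤ n`) of the polynomial ring
`k[x_1, …, x_n]`, realized as `MvPolynomial (Fin n) k`. -/
noncomputable def Xv (k : Type*) [Field k] (n t : ℕ) : MvPolynomial (Fin n) k :=
  if h : 1 ≤ t ∧ t ≤ n then MvPolynomial.X ⟨t - 1, by omega⟩ else 0

/-- The ideal `I_{a,p,q}` of `k[x_1, …, x_n]`, generated by the squarefree monomials
`x_{t_1} ⋯ x_{t_a}` with `p ≤ t_1 < t_2 < ⋯ < t_a ≤ q` and `t_{j+1} ≥ t_j + 2`. -/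
noncomputable def idealI (k : Type*) [Field k] (n a p q : ℕ) :
    Ideal (MvPolynomial (Fin n) k) :=
  Ideal.span { f | ∃ t : ℕ → ℕ, p ≤ t 0 ∧ t (a - 1) ≤ q ∧
    (∀ j, j + 1 < a → t j + 2 ≤ t (j + 1)) ∧
    f = ∏ j ∈ Finset.range a, Xv k n (t j) }

open CategoryTheory

set_option synthInstance.maxHeartbeats 1000000
set_option maxHeartbeats 1000000

/-- The maximal homogeneous ideal `(x_1, …, x_n)` of `k[x_1, …, x_n]`. -/
noncomputable def maxIdl (k : Type) [Field k] (n : ℕ) : Ideal (MvPolynomial (Fin n) k) :=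
  Ideal.span (Set.range MvPolynomial.X)

/-- The `i`-th (total) Betti number of a module `M` over `R = k[x_1, …, x_n]`, as a
cardinal: the dimension over `k` of `Tor_i^R(R/(x_1,…,x_n), M)`, where
`R/(x_1,…,x_n)` is `k` regarded as an `R`-module via evaluation of every variable at `0`. -/
noncomputable def betti (k : Type) [Field k] (n : ℕ)
    (M : ModuleCat (MvPolynomial (Fin n) k)) (i : ℕ) : Cardinal :=
  Module.rank k (RestrictScalars k (MvPolynomial (Fin n) k)
    (((Tor (ModuleCat (MvPolynomial (Fin n) k)) i).obj
        (ModuleCat.of (MvPolynomial (Fin n) k)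
          (MvPolynomial (Fin n) k ⧸ maxIdl k n))).obj M))

/-- `η(e,n,j) = C(n−⌊e/2⌋−2, ⌊e/2⌋+j)·C(⌊e/2⌋+j−1, ⌊e/2⌋)` for `1 ≤ j ≤ n−e−1`, and
`η(e,n,j) = 0` for `j = 0` or `j ≥ n−e`. -/
def eta (e n j : ℕ) : ℕ :=
  if 1 ≤ j ∧ j ≤ n - e - 1 then
    Nat.choose (n - e / 2 - 2) (e / 2 + j) * Nat.choose (e / 2 + j - 1) (e / 2)
  else 0

open CategoryTheory
set_option synthInstance.maxHeartbeats 1000000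
set_option maxHeartbeats 1000000

namespace BC
open MvPolynomial

section
variable {k : Type} [Field k] {m : ℕ}


/-- A light notion of ℕ-grading on a module over the polynomial ring. -/
structure Gr (k : Type) [Field k] (m : ℕ) (M : Type) [AddCommGroup M]
    [Module (MvPolynomial (Fin m) k) M] where
  c : ℕ → M →+ M
  cc : ∀ i j x, c i (c j x) = if i = j then c j x else 0
  cs : ∀ j q (r : MvPolynomial (Fin m) k) x,
    c j (r • c q x) = if q ≤ j then homogeneousComponent (j - q) r • c q x else 0

lemma hc_hc (i j : ℕ) (f : (MvPolynomial (Fin m) k)) : homogeneousComponent i (homogeneousComponent j f) =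
    if i = j then homogeneousComponent j f else 0 :=
  homogeneousComponent_of_mem (homogeneousComponent_mem j f)

lemma hc_mul (j q : ℕ) (r f : (MvPolynomial (Fin m) k)) :
    homogeneousComponent j (r * homogeneousComponent q f) =
    if q ≤ j then homogeneousComponent (j - q) r * homogeneousComponent q f else 0 := by
  conv_lhs => rw [← sum_homogeneousComponent r, Finset.sum_mul, map_sum]
  have h : ∀ i, homogeneousComponent j (homogeneousComponent i r * homogeneousComponent q f) =
      if j = i + q then homogeneousComponent i r * homogeneousComponent q f else 0 := fun i =>
    homogeneousComponent_of_mem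
      ((homogeneousComponent_isHomogeneous i r).mul (homogeneousComponent_isHomogeneous q f))
  simp_rw [h]
  split_ifs with hq
  · have : ∀ i, (j = i + q) ↔ (j - q = i) := fun i => by omega
    simp_rw [this]
    rw [Finset.sum_ite_eq]
    split_ifs with h2
    · rfl
    · rw [homogeneousComponent_eq_zero, zero_mul]
      have h3 : ¬ (j - q < r.totalDegree + 1) := by simpa only [Finset.mem_range] using h2
      omega
  · apply Finset.sum_eq_zero
    intro i _
    rw [if_neg]; omega

/-- the standard grading on the polynomial ring -/
noncomputable def Gr.poly (k : Type) [Field k] (m : ℕ) : Gr k m (MvPolynomial (Fin m) k) where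
  c j := (homogeneousComponent j).toAddMonoidHom
  cc i j x := hc_hc i j x
  cs j q r x := hc_mul j q r x

variable {M M' A B C : Type} [AddCommGroup M] [Module (MvPolynomial (Fin m) k) M] [AddCommGroup M'] [Module (MvPolynomial (Fin m) k) M']
  [AddCommGroup A] [Module (MvPolynomial (Fin m) k) A] [AddCommGroup B] [Module (MvPolynomial (Fin m) k) B] [AddCommGroup C] [Module (MvPolynomial (Fin m) k) C]

/-- graded submodule -/
def Gr.sub (G : Gr k m M) (N : Submodule (MvPolynomial (Fin m) k) M) (h : ∀ j, ∀ x ∈ N, G.c j x ∈ N) : Gr k m N where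
  c j :=
    { toFun := fun x => ⟨G.c j x, h j x x.2⟩
      map_zero' := by ext; simp
      map_add' := by intro x y; ext; simp }
  cc i j x := by
    ext
    simp only [AddMonoidHom.coe_mk, ZeroHom.coe_mk]
    rw [G.cc]; split_ifs <;> rfl
  cs j q r x := by
    ext
    simp only [AddMonoidHom.coe_mk, ZeroHom.coe_mk, Submodule.coe_smul]
    rw [G.cs]; split_ifs <;> rfl

lemma Gr.sub_c (G : Gr k m M) (N : Submodule (MvPolynomial (Fin m) k) M) (h) (j : ℕ) (x : N) :
    ((G.sub N h).c j x : M) = G.c j x := rfl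

/-- product grading -/
def Gr.prod (G : Gr k m A) (H : Gr k m B) : Gr k m (A × B) where
  c j := (G.c j).prodMap (H.c j)
  cc i j x := by
    ext
    · simp only [AddMonoidHom.coe_prodMap, Prod.map_fst]; rw [G.cc]; split_ifs <;> rfl
    · simp only [AddMonoidHom.coe_prodMap, Prod.map_snd]; rw [H.cc]; split_ifs <;> rfl
  cs j q r x := by
    ext
    · simp only [AddMonoidHom.coe_prodMap, Prod.map_fst, Prod.smul_fst]
      rw [G.cs]; split_ifs <;> rfl
    · simp only [AddMonoidHom.coe_prodMap, Prod.map_snd, Prod.smul_snd]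
      rw [H.cs]; split_ifs <;> rfl

/-- free graded module with generators in degrees `deg` -/
noncomputable def Gr.free {ι : Type} (deg : ι → ℕ) : Gr k m (ι → (MvPolynomial (Fin m) k)) where
  c j :=
    { toFun := fun r i => if deg i ≤ j then homogeneousComponent (j - deg i) (r i) else 0
      map_zero' := by ext; simp
      map_add' := by
        intro x y; funext i; simp only [Pi.add_apply, map_add]; split_ifs <;> simp }
  cc i j x := by
    funext t
    simp only [AddMonoidHom.coe_mk, ZeroHom.coe_mk]
    by_cases h1 : deg t ≤ j
    · by_cases h2 : deg t ≤ i
      · simp only [h1, h2, if_true, hc_hc]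
        by_cases h3 : i = j
        · simp [h3, h1]
        · rw [if_neg (by omega), if_neg h3]; rfl
      · rw [if_neg h2, if_neg (by omega)]; rfl
    · by_cases h3 : i = j
      · simp [h3, h1]
      · simp [h1, h3]
  cs j q r x := by
    funext t
    simp only [AddMonoidHom.coe_mk, ZeroHom.coe_mk, Pi.smul_apply, smul_eq_mul]
    by_cases h1 : deg t ≤ q
    · by_cases h2 : deg t ≤ j
      · simp only [h1, h2, if_true, hc_mul]
        by_cases h3 : q ≤ j
        · rw [if_pos (by omega), if_pos h3]
          simp [h1]; left; congr 2; omega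
        · rw [if_neg (by omega), if_neg h3]; rfl
      · rw [if_neg h2, if_neg (by omega)]; rfl
    · by_cases h3 : q ≤ j
      · simp [h3, h1]
      · simp [h3, h1]

lemma Gr.free_c {ι : Type} (deg : ι → ℕ) (j : ℕ) (r : ι → (MvPolynomial (Fin m) k)) (i : ι) :
    (Gr.free deg).c j r i = if deg i ≤ j then homogeneousComponent (j - deg i) (r i) else 0 := rfl

/-- the map from the free module given by generators -/
noncomputable def lc {ι : Type} [Fintype ι] (e : ι → M) : (ι → (MvPolynomial (Fin m) k)) →ₗ[(MvPolynomial (Fin m) k)] M :=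
  Fintype.linearCombination (MvPolynomial (Fin m) k) e

lemma lc_apply {ι : Type} [Fintype ι] (e : ι → M) (r : ι → (MvPolynomial (Fin m) k)) : lc e r = ∑ i, r i • e i :=
  Fintype.linearCombination_apply _ _ _

lemma Gr.c_smul (G : Gr k m M) {q : ℕ} {x : M} (h : G.c q x = x) (j : ℕ) (r : (MvPolynomial (Fin m) k)) :
    G.c j (r • x) = if q ≤ j then homogeneousComponent (j - q) r • x else 0 := by
  have := G.cs j q r x
  rwa [h] at this

lemma lc_c (G : Gr k m M) {ι : Type} [Fintype ι] (deg : ι → ℕ) (e : ι → M)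
    (hd : ∀ i, G.c (deg i) (e i) = e i) (j : ℕ) (r : ι → (MvPolynomial (Fin m) k)) :
    lc e ((Gr.free deg).c j r) = G.c j (lc e r) := by
  rw [lc_apply, lc_apply, map_sum]
  refine Finset.sum_congr rfl fun i _ => ?_
  rw [G.c_smul (hd i), Gr.free_c]
  split_ifs <;> simp

/-- the grading on the first syzygies -/
noncomputable def kerGr (G : Gr k m M) {ι : Type} [Fintype ι] (deg : ι → ℕ) (e : ι → M)
    (hd : ∀ i, G.c (deg i) (e i) = e i) : Gr k m (LinearMap.ker (lc (k := k) (m := m) e)) :=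
  (Gr.free deg).sub _ (fun j r hr => by
    rw [LinearMap.mem_ker] at hr ⊢
    rw [lc_c G deg e hd, hr, map_zero])

/-- `Res lin n β p M G`: `M` has a minimal graded free resolution of length `≤ n` with ranks `β`,
generators of degree at least `p + i` in step `i` (exactly `p + i` if `lin`). -/
def Res (lin : Prop) : (n : ℕ) → (β : ℕ → ℕ) → (p : ℕ) → (M : Type) → [AddCommGroup M] →
    [Module (MvPolynomial (Fin m) k) M] → Gr k m M → Prop
  | 0, β, _, M, _, _, _ => Subsingleton M ∧ ∀ i, β i = 0
  | n + 1, β, p, M, _, _, G =>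
    ∃ (ι : Type) (_ : Fintype ι) (deg : ι → ℕ) (e : ι → M) (hd : ∀ i, G.c (deg i) (e i) = e i),
      Fintype.card ι = β 0 ∧ (∀ i, p ≤ deg i ∧ (lin → deg i = p)) ∧
      (∀ x, ∃ r, lc (k := k) (m := m) e r = x) ∧
      (∀ r, lc (k := k) (m := m) e r = 0 → ∀ i, constantCoeff (r i) = 0) ∧
      Res lin n (fun i => β (i + 1)) (p + 1) _ (kerGr G deg e hd)

lemma Res.transfer {lin : Prop} (n : ℕ) : ∀ (β : ℕ → ℕ) (p s : ℕ) (M M' : Type) [AddCommGroup M]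
    [Module (MvPolynomial (Fin m) k) M] [AddCommGroup M'] [Module (MvPolynomial (Fin m) k) M'] (G : Gr k m M) (G' : Gr k m M')
    (f : M ≃ₗ[(MvPolynomial (Fin m) k)] M') (_ : ∀ j x, f (G.c j x) = G'.c (j + s) (f x)),
    Res lin n β p M G → Res lin n β (p + s) M' G' := by
  induction n with
  | zero =>
    intro β p s M M' _ _ _ _ G G' f hf h
    have := h.1
    exact ⟨f.symm.injective.subsingleton, h.2⟩
  | succ n ih =>
    intro β p s M M' _ _ _ _ G G' f hf h
    obtain ⟨ι, _, deg, e, hd, hc, hp, hs, hm, hr⟩ := h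
    have hl : ∀ r, lc (k := k) (m := m) (fun i => f (e i)) r = f (lc e r) := by
      intro r; simp [lc_apply, map_sum]
    have hd' : ∀ i, G'.c (deg i + s) (f (e i)) = f (e i) := by
      intro i; rw [← hf, hd]
    refine ⟨ι, inferInstance, fun i => deg i + s, fun i => f (e i), hd', hc, ?_, ?_, ?_, ?_⟩
    · intro i
      exact ⟨Nat.add_le_add_right (hp i).1 s, fun h => congrArg (· + s) ((hp i).2 h)⟩
    · intro x
      obtain ⟨r, hr⟩ := hs (f.symm x)
      exact ⟨r, by rw [hl, hr]; simp⟩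
    · intro r h
      rw [hl] at h
      exact hm r (by simpa using h)
    · have hk : LinearMap.ker (lc (k := k) (m := m) e) =
          LinearMap.ker (lc (k := k) (m := m) (fun i => f (e i))) := by
        ext r; rw [LinearMap.mem_ker, LinearMap.mem_ker, hl]; simp
      have := ih (fun i => β (i + 1)) (p + 1) s _ _ (kerGr G deg e hd)
        (kerGr G' (fun i => deg i + s) (fun i => f (e i)) hd') (LinearEquiv.ofEq _ _ hk) (by
          intro j x
          ext1
          simp only [LinearEquiv.coe_ofEq_apply, kerGr, Gr.sub_c]
          funext i
          rw [Gr.free_c, Gr.free_c]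
          by_cases h : deg i ≤ j
          · rw [if_pos h, if_pos (by omega)]; congr 2; omega
          · rw [if_neg h, if_neg (by omega)]) hr
      rw [show p + s + 1 = p + 1 + s by omega]
      exact this

lemma Res.succ {lin : Prop} (n : ℕ) : ∀ (β : ℕ → ℕ) (p : ℕ) (M : Type) [AddCommGroup M]
    [Module (MvPolynomial (Fin m) k) M] (G : Gr k m M), Res lin n β p M G → Res lin (n + 1) β p M G := by
  induction n with
  | zero =>
    intro β p M _ _ G h
    obtain ⟨h1, h2⟩ := h
    refine ⟨Empty, inferInstance, Empty.elim, Empty.elim, fun i => i.elim, ?_, fun i => i.elim,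
      fun x => ⟨0, Subsingleton.elim _ _⟩, fun _ _ i => i.elim, ?_, fun i => h2 _⟩
    · rw [h2]; rfl
    · infer_instance
  | succ n ih =>
    intro β p M _ _ G h
    obtain ⟨ι, _, deg, e, hd, hc, hp, hs, hm, hr⟩ := h
    exact ⟨ι, inferInstance, deg, e, hd, hc, hp, hs, hm, ih _ _ _ _ hr⟩

lemma Res.mono {lin : Prop} {n n' : ℕ} (hn : n ≤ n') {β : ℕ → ℕ} {p : ℕ} {G : Gr k m M}
    (h : Res lin n β p M G) : Res lin n' β p M G := by
  induction hn with
  | refl => exact h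
  | step _ ih => exact Res.succ _ _ _ _ _ ih

/-- weaken the degree bound -/
lemma Res.weaken (n : ℕ) : ∀ (lin : Prop) (β : ℕ → ℕ) (p p' : ℕ) (_ : p' ≤ p) (M : Type) [AddCommGroup M]
    [Module (MvPolynomial (Fin m) k) M] (G : Gr k m M), Res lin n β p M G → Res False n β p' M G := by
  induction n with
  | zero => intro lin β p p' _ M _ _ G h; exact h
  | succ n ih =>
    intro lin β p p' hp' M _ _ G h
    obtain ⟨ι, _, deg, e, hd, hc, hp, hs, hm, hr⟩ := h
    exact ⟨ι, inferInstance, deg, e, hd, hc, fun i => ⟨hp'.trans (hp i).1, False.elim⟩, hs, hm,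
      ih _ _ (p + 1) (p' + 1) (by omega) _ _ hr⟩

/-- elements of degree less than `p` vanish -/
lemma Res.low {lin : Prop} {n : ℕ} {β : ℕ → ℕ} {p : ℕ} {G : Gr k m M}
    (h : Res lin n β p M G) (j : ℕ) (hj : j < p) (x : M) : G.c j x = 0 := by
  cases n with
  | zero => have := h.1; exact Subsingleton.elim _ _
  | succ n =>
    obtain ⟨ι, _, deg, e, hd, hc, hp, hs, hm, hr⟩ := h
    obtain ⟨r, rfl⟩ := hs x
    rw [lc_apply, map_sum]
    refine Finset.sum_eq_zero fun i _ => ?_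
    rw [G.c_smul (hd i), if_neg]
    have := (hp i).1
    omega

lemma hc_zero_eq (r : (MvPolynomial (Fin m) k)) : homogeneousComponent 0 r = MvPolynomial.C (constantCoeff r) := by
  rw [homogeneousComponent_zero]; rfl

end
end BC

namespace BC
open MvPolynomial

section
variable {k : Type} [Field k] {m : ℕ}

lemma Res.horse {lin : Prop} (n : ℕ) : ∀ (α γ : ℕ → ℕ) (p : ℕ) (A B C : Type) [AddCommGroup A]
    [Module (MvPolynomial (Fin m) k) A] [AddCommGroup B] [Module (MvPolynomial (Fin m) k) B]
    [AddCommGroup C] [Module (MvPolynomial (Fin m) k) C]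
    (GA : Gr k m A) (GB : Gr k m B) (GC : Gr k m C)
    (f : A →ₗ[MvPolynomial (Fin m) k] B) (g : B →ₗ[MvPolynomial (Fin m) k] C)
    (_ : ∀ j x, f (GA.c j x) = GB.c j (f x)) (_ : ∀ j x, g (GB.c j x) = GC.c j (g x))
    (_ : Function.Injective f) (_ : Function.Surjective g) (_ : ∀ x, g x = 0 ↔ ∃ y, f y = x),
    Res True n α p A GA → Res lin n γ p C GC → Res lin n (fun i => α i + γ i) p B GB := by
  induction n with
  | zero =>
    intro α γ p A B C _ _ _ _ _ _ GA GB GC f g hf hg fi gs ex hA hC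
    obtain ⟨a1, a2⟩ := hA
    obtain ⟨c1, c2⟩ := hC
    refine ⟨⟨fun x y => ?_⟩, fun i => by simp [a2, c2]⟩
    obtain ⟨x', rfl⟩ := (ex x).1 (Subsingleton.elim _ _)
    obtain ⟨y', rfl⟩ := (ex y).1 (Subsingleton.elim _ _)
    rw [Subsingleton.elim x' y']
  | succ n ih =>
    intro α γ p A B C _ _ _ _ _ _ GA GB GC f g hf hg fi gs ex hA hC
    obtain ⟨ι, _, deg, e, hd, hc, hp, hs, hm, hr⟩ := hA
    obtain ⟨ι', _, deg', e', hd', hc', hp', hs', hm', hr'⟩ := hC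
    have hlift : ∀ i, ∃ b, g b = e' i ∧ GB.c (deg' i) b = b := by
      intro i
      obtain ⟨b, hb⟩ := gs (e' i)
      refine ⟨GB.c (deg' i) b, by rw [hg, hb, hd'], by rw [GB.cc, if_pos rfl]⟩
    choose b hb hb' using hlift
    have hgf : ∀ a, g (f a) = 0 := fun a => (ex _).2 ⟨a, rfl⟩
    let E : ι ⊕ ι' → B := Sum.elim (fun i => f (e i)) b
    let D : ι ⊕ ι' → ℕ := Sum.elim deg deg'
    have hD : ∀ i, GB.c (D i) (E i) = E i := by
      rintro (i | i)
      · simp only [D, E, Sum.elim_inl]; rw [← hf, hd]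
      · simp only [D, E, Sum.elim_inr]; rw [hb']
    have hl : ∀ r, lc (k := k) (m := m) E r =
        f (lc e (fun i => r (Sum.inl i))) + lc b (fun i => r (Sum.inr i)) := by
      intro r
      simp [lc_apply, E, Fintype.sum_sum_type, map_sum]
    have hgb : ∀ r, g (lc (k := k) (m := m) b r) = lc e' r := by
      intro r; simp [lc_apply, map_sum, hb]
    have hmin : ∀ r, lc (k := k) (m := m) E r = 0 → ∀ i, constantCoeff (r i) = 0 := by
      intro r h
      have hR : ∀ i, constantCoeff (r (Sum.inr i)) = 0 := by
        have h2 := congrArg g h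
        rw [hl, map_add, hgf, zero_add, hgb, map_zero] at h2
        exact hm' _ h2
      rintro (i | i)
      · have h3 := congrArg (GB.c p) h
        rw [map_zero, hl, map_add, ← hf] at h3
        have h4 : GB.c p (lc (k := k) (m := m) b (fun i => r (Sum.inr i))) = 0 := by
          rw [lc_apply, map_sum]
          refine Finset.sum_eq_zero fun i _ => ?_
          rw [GB.c_smul (hb' i)]
          split_ifs with h5
          · have : deg' i = p := le_antisymm h5 (hp' i).1
            rw [this, Nat.sub_self, hc_zero_eq, hR, map_zero, zero_smul]
          · rfl
        have h5 : GA.c p (lc (k := k) (m := m) e (fun i => r (Sum.inl i))) =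
            lc (k := k) (m := m) e (fun i => MvPolynomial.C (constantCoeff (r (Sum.inl i)))) := by
          rw [lc_apply, lc_apply, map_sum]
          refine Finset.sum_congr rfl fun i _ => ?_
          rw [GA.c_smul (hd i), (hp i).2 trivial, if_pos le_rfl, Nat.sub_self, hc_zero_eq]
        rw [h4, add_zero, h5] at h3
        have h6 := hm _ (fi (by rw [h3, map_zero])) i
        simpa using h6
      · exact hR i
    refine ⟨ι ⊕ ι', inferInstance, D, E, hD, by rw [Fintype.card_sum, hc, hc'], ?_, ?_, hmin, ?_⟩
    · rintro (i | i)
      · exact ⟨(hp i).1, fun _ => (hp i).2 trivial⟩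
      · exact hp' i
    · intro x
      obtain ⟨s, hs1⟩ := hs' (g x)
      obtain ⟨a, ha⟩ := (ex (x - lc b s)).1 (by rw [map_sub, hgb, hs1, sub_self])
      obtain ⟨r, rfl⟩ := hs a
      refine ⟨Sum.elim r s, ?_⟩
      rw [hl]
      simp only [Sum.elim_inl, Sum.elim_inr, ha]
      abel
    · let F : LinearMap.ker (lc (k := k) (m := m) e) →ₗ[MvPolynomial (Fin m) k]
          LinearMap.ker (lc (k := k) (m := m) E) :=
        { toFun := fun r => ⟨Sum.elim r.1 0, by
            rw [LinearMap.mem_ker, hl]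
            have := r.2
            rw [LinearMap.mem_ker] at this
            simp only [Sum.elim_inl, Sum.elim_inr]
            change f (lc e r.1) + lc b (0 : ι' → _) = 0
            rw [this]; simp⟩
          map_add' := by
            intro x y; ext1; funext i; cases i <;> simp
          map_smul' := by
            intro x y; ext1; funext i; cases i <;> simp }
      let Gm : LinearMap.ker (lc (k := k) (m := m) E) →ₗ[MvPolynomial (Fin m) k]
          LinearMap.ker (lc (k := k) (m := m) e') :=
        { toFun := fun r => ⟨fun i => r.1 (Sum.inr i), by
            have := r.2
            rw [LinearMap.mem_ker] at this ⊢
            have h2 := congrArg g this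
            rwa [hl, map_add, hgf, zero_add, hgb, map_zero] at h2⟩
          map_add' := by intro x y; rfl
          map_smul' := by intro x y; rfl }
      refine ih (fun i => α (i + 1)) (fun i => γ (i + 1)) (p + 1) _ _ _ (kerGr GA deg e hd)
        (kerGr GB D E hD) (kerGr GC deg' e' hd') F Gm ?_ ?_ ?_ ?_ ?_ hr hr'
      · intro j x
        ext1
        funext i
        rcases i with i | i
        · rfl
        · change (0 : MvPolynomial (Fin m) k) =
            if deg' i ≤ j then homogeneousComponent (j - deg' i) (0 : MvPolynomial (Fin m) k) else 0
          simp
      · intro j x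
        ext1
        rfl
      · intro x y h
        ext1
        funext i
        exact congrFun (congrArg Subtype.val h) (Sum.inl i)
      · intro s
        have h1 := s.2
        rw [LinearMap.mem_ker] at h1
        obtain ⟨a, ha⟩ := (ex (lc b s.1)).1 (by rw [hgb, h1])
        obtain ⟨r, rfl⟩ := hs a
        refine ⟨⟨Sum.elim (-r) s.1, ?_⟩, ?_⟩
        · rw [LinearMap.mem_ker, hl]
          simp only [Sum.elim_inl, Sum.elim_inr]
          change f (lc e (-r)) + lc b s.1 = 0
          rw [map_neg, map_neg, ha]; simp
        · rfl
      · intro x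
        constructor
        · intro h
          have hz : ∀ i, x.1 (Sum.inr i) = 0 := fun i => congrFun (congrArg Subtype.val h) i
          have h1 := x.2
          rw [LinearMap.mem_ker, hl] at h1
          have hz' : (fun i => x.1 (Sum.inr i)) = 0 := funext hz
          rw [hz', map_zero, add_zero] at h1
          refine ⟨⟨fun i => x.1 (Sum.inl i), ?_⟩, ?_⟩
          · rw [LinearMap.mem_ker]; exact fi (by rw [h1, map_zero])
          · ext1
            funext i
            rcases i with i | i
            · rfl
            · exact (hz i).symm
        · rintro ⟨y, rfl⟩
          rfl

lemma Res.cone {lin : Prop} (n : ℕ) (ξ η : ℕ → ℕ) (q : ℕ) (X Y Z : Type) [AddCommGroup X]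
    [Module (MvPolynomial (Fin m) k) X] [AddCommGroup Y] [Module (MvPolynomial (Fin m) k) Y]
    [AddCommGroup Z] [Module (MvPolynomial (Fin m) k) Z]
    (GX : Gr k m X) (GY : Gr k m Y) (GZ : Gr k m Z)
    (f : X →ₗ[MvPolynomial (Fin m) k] Y) (g : Y →ₗ[MvPolynomial (Fin m) k] Z)
    (hf : ∀ j x, f (GX.c j x) = GY.c j (f x)) (hg : ∀ j x, g (GY.c j x) = GZ.c j (g x))
    (fi : Function.Injective f) (gs : Function.Surjective g) (ex : ∀ x, g x = 0 ↔ ∃ y, f y = x)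
    (hY : Res True (n + 1) η q Y GY) (hX : Res lin n ξ (q + 1) X GX) :
    Res lin (n + 1) (fun i => η i + (if i = 0 then 0 else ξ (i - 1))) q Z GZ := by
  obtain ⟨ι, _, deg, e, hd, hc, hp, hs, hm, hr⟩ := hY
  have hl : ∀ r, lc (k := k) (m := m) (fun i => g (e i)) r = g (lc e r) := by
    intro r; simp [lc_apply, map_sum]
  have hd' : ∀ i, GZ.c (deg i) (g (e i)) = g (e i) := by
    intro i; rw [← hg, hd]
  refine ⟨ι, inferInstance, deg, fun i => g (e i), hd', by simp [hc], fun i => ⟨(hp i).1, fun _ =>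
    (hp i).2 trivial⟩, ?_, ?_, ?_⟩
  · intro z
    obtain ⟨y, rfl⟩ := gs z
    obtain ⟨r, rfl⟩ := hs y
    exact ⟨r, hl r⟩
  · intro r h i
    rw [hl] at h
    obtain ⟨x, hx⟩ := (ex _).1 h
    have h3 := congrArg (GY.c q) hx
    rw [← hf, hX.low q (by omega), map_zero] at h3
    have h5 : GY.c q (lc (k := k) (m := m) e r) =
        lc (k := k) (m := m) e (fun i => MvPolynomial.C (constantCoeff (r i))) := by
      rw [lc_apply, lc_apply, map_sum]
      refine Finset.sum_congr rfl fun i _ => ?_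
      rw [GY.c_smul (hd i), (hp i).2 trivial, if_pos le_rfl, Nat.sub_self, hc_zero_eq]
    rw [h5] at h3
    simpa using hm _ h3.symm i
  · let F : LinearMap.ker (lc (k := k) (m := m) e) →ₗ[MvPolynomial (Fin m) k]
        LinearMap.ker (lc (k := k) (m := m) (fun i => g (e i))) :=
      Submodule.inclusion (fun r h => by
        rw [LinearMap.mem_ker] at h ⊢
        rw [hl, h, map_zero])
    have hex : ∀ r : LinearMap.ker (lc (k := k) (m := m) (fun i => g (e i))),
        ∃ x, f x = lc e r.1 := by
      intro r
      have := r.2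
      rw [LinearMap.mem_ker, hl] at this
      exact (ex _).1 this
    choose G0 hG0 using hex
    let Gm : LinearMap.ker (lc (k := k) (m := m) (fun i => g (e i))) →ₗ[MvPolynomial (Fin m) k] X :=
      { toFun := G0
        map_add' := by
          intro x y; apply fi; rw [map_add, hG0, hG0, hG0]; simp
        map_smul' := by
          intro x y; apply fi; rw [map_smul, hG0, hG0]; simp }
    have hGm : ∀ r, f (Gm r) = lc e r.1 := hG0
    have := Res.horse (lin := lin) n (fun i => η (i + 1)) ξ (q + 1) _ _ _ (kerGr GY deg e hd)
      (kerGr GZ deg (fun i => g (e i)) hd') GX F Gm (fun j x => rfl) ?_ ?_ ?_ ?_ hr hX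
    · simpa using this
    · intro j x
      apply fi
      rw [hf, hGm, hGm]
      exact lc_c GY deg e hd j x.1
    · exact Submodule.inclusion_injective _
    · intro x
      obtain ⟨r, hr⟩ := hs (f x)
      refine ⟨⟨r, ?_⟩, ?_⟩
      · rw [LinearMap.mem_ker, hl, hr]; exact (ex _).2 ⟨x, rfl⟩
      · apply fi; rw [hGm, hr]
    · intro r
      constructor
      · intro h
        have h2 := hGm r
        rw [h, map_zero] at h2
        exact ⟨⟨r.1, h2.symm⟩, rfl⟩
      · rintro ⟨y, rfl⟩
        apply fi
        rw [hGm, map_zero]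
        exact y.2

/-- homogeneous ideals -/
def Hmg (I : Ideal (MvPolynomial (Fin m) k)) : Prop :=
  ∀ j, ∀ x ∈ I, homogeneousComponent j x ∈ I

/-- the induced grading on an ideal -/
noncomputable def idGr (I : Ideal (MvPolynomial (Fin m) k)) (h : Hmg I) : Gr k m I :=
  (Gr.poly k m).sub I h

lemma Res.mv {lin : Prop} (n : ℕ) (α β γ : ℕ → ℕ) (q : ℕ)
    (I J K S : Ideal (MvPolynomial (Fin m) k))
    (hI : Hmg I) (hJ : Hmg J) (hK : Hmg K) (hS : Hmg S) (eK : I ⊓ J = K) (eS : I ⊔ J = S)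
    (rI : Res True (n + 1) α q I (idGr I hI)) (rJ : Res True (n + 1) β q J (idGr J hJ))
    (rK : Res lin n γ (q + 1) K (idGr K hK)) :
    Res lin (n + 1) (fun i => α i + β i + (if i = 0 then 0 else γ (i - 1))) q S (idGr S hS) := by
  subst eK eS
  have rP : Res True (n + 1) (fun i => α i + β i) q (I × J) ((idGr I hI).prod (idGr J hJ)) := by
    refine Res.horse (n + 1) α β q _ _ _ (idGr I hI) _ (idGr J hJ)
      (LinearMap.inl _ I J) (LinearMap.snd _ I J) ?_ ?_ LinearMap.inl_injective
      LinearMap.snd_surjective ?_ rI rJ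
    · intro j x
      apply Prod.ext
      · rfl
      · exact (map_zero ((idGr J hJ).c j)).symm
    · intro j x; rfl
    · rintro ⟨x, y⟩
      constructor
      · intro h
        exact ⟨x, Prod.ext rfl h.symm⟩
      · rintro ⟨x', h⟩
        exact (congrArg Prod.snd h).symm
  let f : (I ⊓ J : Ideal (MvPolynomial (Fin m) k)) →ₗ[MvPolynomial (Fin m) k] I × J :=
    { toFun := fun x => (⟨x.1, x.2.1⟩, ⟨-x.1, J.neg_mem x.2.2⟩)
      map_add' := by
        intro x y; ext <;> simp [add_comm]
      map_smul' := by
        intro x y; ext <;> simp }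
  let g : I × J →ₗ[MvPolynomial (Fin m) k] (I ⊔ J : Ideal (MvPolynomial (Fin m) k)) :=
    LinearMap.coprod (Submodule.inclusion le_sup_left) (Submodule.inclusion le_sup_right)
  refine Res.cone n γ (fun i => α i + β i) q _ _ _ (idGr _ hK) _ (idGr _ hS) f g ?_ ?_ ?_ ?_ ?_ rP rK
  · intro j x
    apply Prod.ext
    · rfl
    · ext1
      change - homogeneousComponent j x.1 = homogeneousComponent j (- x.1)
      rw [map_neg]
  · intro j x
    ext1
    change homogeneousComponent j x.1.1 + homogeneousComponent j x.2.1 =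
      homogeneousComponent j (x.1.1 + x.2.1)
    rw [map_add]
  · intro x y h
    ext1
    exact congrArg (fun z => z.1.1) h
  · rintro ⟨z, hz⟩
    obtain ⟨x, hx, y, hy, rfl⟩ := Submodule.mem_sup.1 hz
    exact ⟨(⟨x, hx⟩, ⟨y, hy⟩), rfl⟩
  · rintro ⟨⟨x, hx⟩, ⟨y, hy⟩⟩
    constructor
    · intro h
      have h2 : x + y = 0 := congrArg Subtype.val h
      have h3 : y = - x := (neg_eq_of_add_eq_zero_right h2).symm
      subst h3
      exact ⟨⟨x, hx, by simpa using hy⟩, rfl⟩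
    · rintro ⟨z, h⟩
      have h1 : z.1 = x := congrArg (fun z => z.1.1) h
      have h2 : - z.1 = y := congrArg (fun z => z.2.1) h
      ext1
      change x + y = 0
      rw [← h1, ← h2]; simp

end
end BC

namespace BC
open MvPolynomial

section
variable {k : Type} [Field k] {m : ℕ}

/-- monomial ideal -/
noncomputable def MI (k : Type) [Field k] {m : ℕ} (U : (Fin m →₀ ℕ) → Prop) : Ideal (MvPolynomial (Fin m) k) :=
  Ideal.span ((fun s => monomial s (1 : k)) '' {α | U α})

/-- up-closed sets of exponents -/
def Up (U : (Fin m →₀ ℕ) → Prop) : Prop := ∀ α β, α ≤ β → U α → U β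

lemma mem_MI {U : (Fin m →₀ ℕ) → Prop} (h : Up U) (f : MvPolynomial (Fin m) k) :
    f ∈ MI k U ↔ ∀ α ∈ f.support, U α := by
  rw [MI, mem_ideal_span_monomial_image]
  constructor
  · intro H α ha
    obtain ⟨β, hb, hle⟩ := H α ha
    exact h _ _ hle hb
  · intro H α ha
    exact ⟨α, H α ha, le_rfl⟩

lemma MI_hmg {U : (Fin m →₀ ℕ) → Prop} (h : Up U) : Hmg (MI k U) := by
  intro j x hx
  rw [mem_MI h] at hx ⊢
  intro α ha
  apply hx
  rw [mem_support_iff] at ha ⊢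
  rw [coeff_homogeneousComponent] at ha
  intro h0
  apply ha
  rw [h0]; simp

lemma MI_inf {U V : (Fin m →₀ ℕ) → Prop} (hU : Up U) (hV : Up V) :
    MI k U ⊓ MI k V = MI k (fun α => U α ∧ V α) := by
  have h : Up (fun α => U α ∧ V α) := fun α β hl hh => ⟨hU _ _ hl hh.1, hV _ _ hl hh.2⟩
  ext f
  rw [Submodule.mem_inf, mem_MI hU, mem_MI hV, mem_MI h]
  constructor
  · intro H α ha; exact ⟨H.1 α ha, H.2 α ha⟩
  · intro H; exact ⟨fun α ha => (H α ha).1, fun α ha => (H α ha).2⟩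

lemma MI_sup (U V : (Fin m →₀ ℕ) → Prop) :
    MI k U ⊔ MI k V = MI k (fun α => U α ∨ V α) := by
  rw [MI, MI, MI, ← Ideal.span_union, ← Set.image_union]
  rfl

/-- resolution of a monomial ideal -/
def RU (k : Type) [Field k] {m : ℕ} (lin : Prop) (n : ℕ) (β : ℕ → ℕ) (p : ℕ)
    (U : (Fin m →₀ ℕ) → Prop) : Prop :=
  ∃ h : Hmg (MI k U), Res lin n β p (MI k U) (idGr _ h)

lemma RU.congr {lin : Prop} {n p : ℕ} {β β' : ℕ → ℕ} {U V : (Fin m →₀ ℕ) → Prop}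
    (h : RU k lin n β p U) (hb : ∀ i, β i = β' i) (hU : ∀ α, U α ↔ V α) : RU k lin n β' p V := by
  obtain rfl : U = V := funext fun α => propext (hU α)
  obtain rfl : β = β' := funext hb
  exact h

lemma RU.mono {lin : Prop} {n n' p : ℕ} {β : ℕ → ℕ} {U : (Fin m →₀ ℕ) → Prop}
    (h : RU k lin n β p U) (hn : n ≤ n') : RU k lin n' β p U := by
  obtain ⟨h1, h2⟩ := h
  exact ⟨h1, Res.mono hn h2⟩

lemma RU.weaken {lin : Prop} {n p p' : ℕ} {β : ℕ → ℕ} {U : (Fin m →₀ ℕ) → Prop}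
    (h : RU k lin n β p U) (hp : p' ≤ p) : RU k False n β p' U := by
  obtain ⟨h1, h2⟩ := h
  exact ⟨h1, Res.weaken _ _ _ _ _ hp _ _ h2⟩

lemma RU.mv {lin : Prop} {n q : ℕ} {α β γ : ℕ → ℕ} {U V K S : (Fin m →₀ ℕ) → Prop}
    (hU : Up U) (hV : Up V)
    (rU : RU k True (n + 1) α q U) (rV : RU k True (n + 1) β q V) (rK : RU k lin n γ (q + 1) K)
    (eK : ∀ α, U α ∧ V α ↔ K α) (eS : ∀ α, U α ∨ V α ↔ S α) :
    RU k lin (n + 1) (fun i => α i + β i + (if i = 0 then 0 else γ (i - 1))) q S := by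
  obtain rfl : K = fun α => U α ∧ V α := funext fun α => (propext (eK α)).symm
  obtain rfl : S = fun α => U α ∨ V α := funext fun α => (propext (eS α)).symm
  obtain ⟨h1, r1⟩ := rU
  obtain ⟨h2, r2⟩ := rV
  obtain ⟨h3, r3⟩ := rK
  have hS : Hmg (MI k (fun α => U α ∨ V α)) := MI_hmg (by
    rintro a b hl (h | h)
    · exact Or.inl (hU _ _ hl h)
    · exact Or.inr (hV _ _ hl h))
  exact ⟨hS, Res.mv n α β γ q _ _ _ _ h1 h2 h3 hS (MI_inf hU hV) (MI_sup U V) r1 r2 r3⟩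

lemma hc_X_mul (i : Fin m) (j : ℕ) (x : MvPolynomial (Fin m) k) :
    homogeneousComponent (j + 1) (X i * x) = X i * homogeneousComponent j x := by
  have h : homogeneousComponent 1 (X i : MvPolynomial (Fin m) k) = X i := by
    rw [homogeneousComponent_of_mem (isHomogeneous_X k i), if_pos rfl]
  have := hc_mul (j + 1) 1 x (X i)
  rw [h, if_pos (by omega), Nat.add_sub_cancel] at this
  rw [mul_comm, this, mul_comm]

lemma RU.shift {lin : Prop} {n p : ℕ} {β : ℕ → ℕ} {U : (Fin m →₀ ℕ) → Prop} (i : Fin m)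
    (hU : Up U) (hi : ∀ α, U (α + Finsupp.single i 1) → U α) (r : RU k lin n β p U) :
    RU k lin n β (p + 1) (fun α => α i ≠ 0 ∧ U α) := by
  classical
  obtain ⟨h1, r⟩ := r
  have hV : Up (fun α : Fin m →₀ ℕ => α i ≠ 0 ∧ U α) := by
    intro a b hl h
    refine ⟨?_, hU _ _ hl h.2⟩
    have := hl i
    have := h.1
    omega
  have hmem : ∀ x ∈ MI k U, X i * x ∈ MI k (fun α => α i ≠ 0 ∧ U α) := by
    intro x hx
    rw [mem_MI hU] at hx
    rw [mem_MI hV]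
    intro α ha
    rw [mem_support_iff, coeff_X_mul'] at ha
    split_ifs at ha with h
    · rw [Finsupp.mem_support_iff] at h
      refine ⟨h, hU _ _ ?_ (hx _ (mem_support_iff.2 ha))⟩
      exact tsub_le_self
    · exact absurd rfl ha
  let F : MI k U →ₗ[MvPolynomial (Fin m) k] MI k (fun α => α i ≠ 0 ∧ U α) :=
    { toFun := fun x => ⟨X i * x.1, hmem x.1 x.2⟩
      map_add' := by intro x y; ext1; simp [mul_add]
      map_smul' := by intro x y; ext1; simp; ring }
  have hF : Function.Bijective F := by
    constructor
    · intro x y h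
      have h2 : X i * x.1 = X i * y.1 := congrArg Subtype.val h
      ext1
      exact mul_left_cancel₀ (X_ne_zero i) h2
    · rintro ⟨f, hf⟩
      rw [mem_MI hV] at hf
      refine ⟨⟨f.divMonomial (Finsupp.single i 1), ?_⟩, ?_⟩
      · rw [mem_MI hU]
        intro α ha
        rw [mem_support_iff, coeff_divMonomial] at ha
        apply hi
        rw [add_comm]
        exact (hf _ (mem_support_iff.2 ha)).2
      · ext1
        change X i * f.divMonomial (Finsupp.single i 1) = f
        ext α
        rw [coeff_X_mul']
        split_ifs with h
        · rw [coeff_divMonomial, add_tsub_cancel_of_le]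
          rw [Finsupp.single_le_iff]
          rw [Finsupp.mem_support_iff] at h
          omega
        · by_contra h3
          rw [Finsupp.mem_support_iff] at h
          exact h (hf α (mem_support_iff.2 (fun h4 => h3 h4.symm))).1
  refine ⟨MI_hmg hV, Res.transfer n β p 1 _ _ _ _ (LinearEquiv.ofBijective F hF) ?_ r⟩
  intro j x
  ext1
  exact (hc_X_mul i j x.1).symm

lemma RU.bot {lin : Prop} {n p : ℕ} {U : (Fin m →₀ ℕ) → Prop} (h : ∀ α, ¬ U α) :
    RU k lin n (fun _ => 0) p U := by
  have hU : Up U := fun α _ _ h' => (h α h').elim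
  refine RU.mono (n := 0) ⟨MI_hmg hU, ⟨⟨?_⟩, fun _ => rfl⟩⟩ (Nat.zero_le _)
  have : ∀ x ∈ MI k U, x = 0 := by
    intro x hx
    rw [mem_MI hU] at hx
    rw [← support_eq_empty, Finset.eq_empty_iff_forall_notMem]
    exact fun α ha => h α (hx α ha)
  intro x y
  ext1
  rw [this _ x.2, this _ y.2]

lemma RU.top {U : (Fin m →₀ ℕ) → Prop} (h : ∀ α, U α) :
    RU k True 1 (fun i => if i = 0 then 1 else 0) 0 U := by
  have hU : Up U := fun _ β _ _ => h β
  have hm : ∀ x, x ∈ MI k U := fun x => (mem_MI hU x).2 fun α _ => h α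
  have hl : ∀ r : Unit → MvPolynomial (Fin m) k,
      (lc (k := k) (m := m) (fun _ : Unit => (⟨1, hm 1⟩ : MI k U)) r).1 = r () := by
    intro r
    simp [lc_apply]
  have hz : ∀ r : Unit → MvPolynomial (Fin m) k,
      (lc (k := k) (m := m) (fun _ : Unit => (⟨1, hm 1⟩ : MI k U)) r) = 0 → r = 0 := by
    intro r h
    funext i
    rw [← hl r, h]; rfl
  refine ⟨MI_hmg hU, Unit, inferInstance, fun _ => 0, fun _ => ⟨1, hm 1⟩, ?_, by simp,
    fun _ => ⟨le_rfl, fun _ => rfl⟩, ?_, ?_, ?_⟩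
  · intro i
    ext1
    change homogeneousComponent 0 (1 : MvPolynomial (Fin m) k) = 1
    rw [hc_zero_eq]; simp
  · intro x
    exact ⟨fun _ => x.1, Subtype.ext (hl _)⟩
  · intro r h i
    rw [hz r h]; simp
  · refine ⟨⟨fun x y => ?_⟩, fun i => by simp⟩
    ext1
    rw [hz _ x.2, hz _ y.2]

end
end BC

namespace BC
open MvPolynomial

section

/-- existence of a chain with gaps `≥ 2` of size `b` in `s ∩ [o, o+L)` -/
def ind (s : ℕ → Prop) (o : ℕ) : ℕ → ℕ → Prop
  | _, 0 => True
  | L, b + 1 => ∃ u, u < L ∧ s (o + u) ∧ ind s o (u - 1) b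

lemma ind_zero (s : ℕ → Prop) (o L : ℕ) : ind s o L 0 := by cases L <;> trivial

lemma ind_succ (s : ℕ → Prop) (o L b : ℕ) :
    ind s o L (b + 1) ↔ ∃ u, u < L ∧ s (o + u) ∧ ind s o (u - 1) b := by
  cases L <;> rfl

lemma ind_step (s : ℕ → Prop) (o L b : ℕ) :
    ind s o (L + 1) (b + 1) ↔ ind s o L (b + 1) ∨ (s (o + L) ∧ ind s o (L - 1) b) := by
  rw [ind_succ, ind_succ]
  constructor
  · rintro ⟨u, h1, h2⟩
    rcases Nat.lt_succ_iff_lt_or_eq.1 h1 with h | rfl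
    · exact Or.inl ⟨u, h, h2⟩
    · exact Or.inr h2
  · rintro (⟨u, h1, h2⟩ | h2)
    · exact ⟨u, by omega, h2⟩
    · exact ⟨L, by omega, h2⟩

lemma ind_mono {s : ℕ → Prop} {o L L' b : ℕ} (h : L ≤ L') (hi : ind s o L b) : ind s o L' b := by
  cases b with
  | zero => exact ind_zero _ _ _
  | succ b =>
    rw [ind_succ] at hi ⊢
    obtain ⟨u, h1, h2⟩ := hi
    exact ⟨u, by omega, h2⟩

lemma ind_len {s : ℕ → Prop} {o b : ℕ} : ∀ {L : ℕ}, ind s o L b → 2 * b ≤ L + 1 := by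
  induction b with
  | zero => intro L _; omega
  | succ b ih =>
    intro L h
    rw [ind_succ] at h
    obtain ⟨u, h1, _, h3⟩ := h
    have := ih h3
    omega

lemma ind_pred {s : ℕ → Prop} {o b L : ℕ} (h : ind s o L (b + 1)) : ind s o (L - 1) b := by
  rw [ind_succ] at h
  obtain ⟨u, h1, _, h3⟩ := h
  exact ind_mono (by omega) h3

lemma ind_tail {s : ℕ → Prop} {o b : ℕ} : ∀ {L : ℕ}, ind s o L (b + 1) → ind s (o + 1) (L - 1) b := by
  induction b with
  | zero => intro L _; exact ind_zero _ _ _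
  | succ b ih =>
    intro L h
    rw [ind_succ] at h
    obtain ⟨u, h1, h2, h3⟩ := h
    have := ind_len h3
    rw [ind_succ]
    refine ⟨u - 1, by omega, ?_, ih h3⟩
    rwa [show o + 1 + (u - 1) = o + u by omega]

lemma ind_ext {s : ℕ → Prop} {o b : ℕ} : ∀ {L : ℕ}, ind s (o + 1) L b → ind s o (L + 1) b := by
  induction b with
  | zero => intro L _; exact ind_zero _ _ _
  | succ b ih =>
    intro L h
    rw [ind_succ] at h ⊢
    obtain ⟨u, h1, h2, h3⟩ := h
    refine ⟨u + 1, by omega, ?_, ?_⟩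
    · rwa [show o + (u + 1) = o + 1 + u by omega]
    · cases b with
      | zero => exact ind_zero _ _ _
      | succ b =>
        have := ind_len h3
        exact ind_mono (by omega) (ih h3)

lemma ind_dep {s s' : ℕ → Prop} {o b : ℕ} : ∀ {L : ℕ}, (∀ t, t < o + L → s t → s' t) →
    ind s o L b → ind s' o L b := by
  induction b with
  | zero => intro L _ _; exact ind_zero _ _ _
  | succ b ih =>
    intro L hs h
    rw [ind_succ] at h ⊢
    obtain ⟨u, h1, h2, h3⟩ := h
    exact ⟨u, h1, hs _ (by omega) h2, ih (fun t ht => hs t (by omega)) h3⟩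

lemma ind_key {s : ℕ → Prop} {b : ℕ} : ∀ {q : ℕ}, 2 * b ≤ q → ind s 0 q b → ind s 1 q b →
    ind s 0 (q + 1) (b + 1) ∨ ind s 1 (q - 1) b := by
  induction b with
  | zero => intro q _ _ _; exact Or.inr (ind_zero _ _ _)
  | succ b ih =>
    intro q hq h0 h1
    obtain ⟨q, rfl⟩ : ∃ q', q = q' + 2 := ⟨q - 2, by omega⟩
    rw [ind_step] at h1
    rcases h1 with h1 | ⟨h1, h2⟩
    · exact Or.inr h1
    · have h0' := h0
      rw [ind_step] at h0'
      have done : ind s 0 (q + 1) (b + 1) → ind s 0 (q + 2 + 1) (b + 1 + 1) := by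
        intro h
        rw [ind_succ]
        exact ⟨q + 2, by omega, by rwa [show 0 + (q + 2) = 1 + (q + 1) by omega], h⟩
      rcases h0' with h3 | ⟨h3, h4⟩
      · exact Or.inl (done h3)
      · rcases ih (by omega) h4 (ind_mono (by omega) h2) with h5 | h5
        · exact Or.inl (done h5)
        · right
          rw [ind_succ]
          exact ⟨q, by omega, by rwa [show 1 + q = 0 + (q + 1) by omega], h5⟩

/-- intermediate ideals -/
def W (s : ℕ → Prop) (b n : ℕ) : Prop := ind s 0 n (b + 1) ∧ ind s 1 (n - 2) b

lemma W_step {s : ℕ → Prop} {b n : ℕ} (h : 2 * b + 1 ≤ n) :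
    W s b (n + 1) ↔ ind s 0 n (b + 1) ∨ (s n ∧ ind s 1 (n - 2) b) := by
  constructor
  · rintro ⟨h1, h2⟩
    rw [ind_step] at h1
    rcases h1 with h1 | ⟨h1, h3⟩
    · exact Or.inl h1
    · rw [zero_add] at h1
      rcases ind_key (by omega) h3 h2 with h4 | h4
      · left
        exact ind_mono (by omega) h4
      · right
        exact ⟨h1, ind_mono (by omega) h4⟩
  · rintro (h1 | ⟨h1, h2⟩)
    · exact ⟨ind_mono (by omega) h1, ind_mono (by omega) (ind_tail h1)⟩
    · refine ⟨?_, ind_mono (by omega) h2⟩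
      rw [ind_step]
      right
      refine ⟨by rwa [zero_add], ?_⟩
      cases b with
      | zero => exact ind_zero _ _ _
      | succ b => exact ind_mono (by omega) (ind_ext h2)

lemma J_iff {s : ℕ → Prop} {b n : ℕ} (h : 2 * b + 1 ≤ n) :
    W s b (n + 1) ↔ ind s 0 n (b + 1) ∨ ind s 1 n (b + 1) := by
  rw [W_step h]
  obtain ⟨n, rfl⟩ : ∃ n', n = n' + 1 := ⟨n - 1, by omega⟩
  constructor
  · rintro (h1 | ⟨h1, h2⟩)
    · exact Or.inl h1
    · right
      rw [ind_step]
      exact Or.inr ⟨by rwa [add_comm], h2⟩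
  · rintro (h1 | h1)
    · exact Or.inl h1
    · rw [ind_step] at h1
      rcases h1 with h1 | ⟨h1, h2⟩
      · exact Or.inl (ind_ext h1)
      · exact Or.inr ⟨by rwa [add_comm], h2⟩

lemma ind_full {s : ℕ → Prop} {o b : ℕ} : ind s o (2 * b - 1) b ↔ ∀ j < b, s (o + 2 * j) := by
  induction b with
  | zero => exact ⟨fun _ j hj => by omega, fun _ => ind_zero _ _ _⟩
  | succ b ih =>
    rw [ind_succ]
    constructor
    · rintro ⟨u, h1, h2, h3⟩ j hj
      have := ind_len h3
      obtain rfl : u = 2 * b := by omega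
      rcases Nat.lt_succ_iff_lt_or_eq.1 hj with h | rfl
      · exact ih.1 h3 j h
      · exact h2
    · intro h
      exact ⟨2 * b, by omega, h b (by omega), ih.2 fun j hj => h j (by omega)⟩

lemma W_base {s : ℕ → Prop} {b : ℕ} : W s b (2 * b + 1) ↔ ∀ t < 2 * b + 1, s t := by
  have e1 : 2 * b + 1 = 2 * (b + 1) - 1 := by omega
  have e2 : 2 * b + 1 - 2 = 2 * b - 1 := by omega
  rw [W, e2, ind_full, e1, ind_full]
  constructor
  · rintro ⟨h1, h2⟩ t ht
    rcases Nat.even_or_odd' t with ⟨c, rfl | rfl⟩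
    · have := h1 c (by omega); rwa [zero_add] at this
    · have := h2 c (by omega); rwa [add_comm] at this
  · intro h
    exact ⟨fun j hj => h _ (by omega), fun j hj => h _ (by omega)⟩

/-- Betti numbers of the linear ideals -/
def pp (b L j : ℕ) : ℕ :=
  if b = 0 then (if j = 0 then 1 else 0) else (L + 1 - b).choose (b + j) * (b + j - 1).choose (b - 1)

lemma pp_step (b L i : ℕ) : pp (b + 1) L i + pp b (L - 1) i +
    (if i = 0 then 0 else pp (b + 1) L (i - 1)) = pp (b + 1) (L + 1) i := by
  rcases Nat.eq_zero_or_pos b with rfl | hb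
  · rcases i with _ | i
    · simp [pp]
    · simp only [pp]
      simp
      rw [show 1 + (i + 1) = (i + 1) + 1 by omega, Nat.choose_succ_succ, Nat.add_comm 1 i]
      ring
  · obtain ⟨c, rfl⟩ : ∃ c, b = c + 1 := ⟨b - 1, by omega⟩
    by_cases hL : c + 1 ≤ L
    · obtain ⟨N, rfl⟩ : ∃ N, L = N + (c + 1) := ⟨L - (c + 1), by omega⟩
      have e1 : N + (c + 1) + 1 - (c + 1 + 1) = N := by omega
      have e2 : N + (c + 1) - 1 + 1 - (c + 1) = N := by omega
      have e3 : N + (c + 1) + 1 + 1 - (c + 1 + 1) = N + 1 := by omega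
      rcases i with _ | i
      · simp only [pp, e1, e2, e3]
        simp
        rw [Nat.choose_succ_succ' N (c + 1)]
        omega
      · simp only [pp, e1, e2, e3]
        have a1 : c + 1 + 1 + (i + 1) = c + i + 2 + 1 := by omega
        have a2 : c + 1 + (i + 1) = c + i + 2 := by omega
        have a3 : c + 1 + 1 + (i + 1 - 1) = c + i + 2 := by omega
        have a4 : c + i + 2 + 1 - 1 = c + i + 1 + 1 := by omega
        have a5 : c + i + 2 - 1 = c + i + 1 := by omega
        have a6 : c + 1 + 1 - 1 = c + 1 := by omega
        have a7 : c + 1 - 1 = c := by omega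
        simp only [a1, a2, a3, a4, a5, a6, a7]
        simp
        rw [Nat.choose_succ_succ N, Nat.choose_succ_succ (c + i + 1) c]
        ring
    · have e1 : L + 1 - (c + 1 + 1) = 0 := by omega
      have e2 : L - 1 + 1 - (c + 1) = 0 := by omega
      have e3 : L + 1 + 1 - (c + 1 + 1) = 0 := by omega
      simp only [pp, e1, e2, e3]
      rw [Nat.choose_eq_zero_of_lt (show 0 < c + 1 + 1 + i by omega),
        Nat.choose_eq_zero_of_lt (show 0 < c + 1 + i by omega),
        Nat.choose_eq_zero_of_lt (show 0 < c + 1 + 1 + (i - 1) by omega)]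
      simp

/-- the dual part of the Betti numbers -/
def yy (b n j : ℕ) : ℕ :=
  if j + 2 * b + 2 ≤ n then (n - b - 1).choose j * (n - b - 2 - j).choose b
  else if j + 2 * b + 1 = n then 1 else 0

/-- Betti numbers of the intermediate ideals -/
def ww (b n j : ℕ) : ℕ := pp (b + 1) (n - 1) j + yy b n j

lemma ww_base (b j : ℕ) : ww b (2 * b + 1) j = if j = 0 then 1 else 0 := by
  have e1 : 2 * b + 1 - 1 + 1 - (b + 1) = b := by omega
  simp only [ww, pp, yy, e1]
  rw [Nat.choose_eq_zero_of_lt (show b < b + 1 + j by omega), if_neg (by omega), if_neg (by omega)]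
  by_cases h : j = 0
  · subst h; simp
  · rw [if_neg (by omega), if_neg h]; simp

lemma yy_step (b n j : ℕ) (hb : 1 ≤ b) (hn : 2 * b + 1 ≤ n) :
    pp b (n - 2) j + (if j = 0 then 0 else ww b n (j - 1)) = yy b (n + 1) j := by
  obtain ⟨c, rfl⟩ : ∃ c, b = c + 1 := ⟨b - 1, by omega⟩
  obtain ⟨N, rfl⟩ : ∃ N, n = N + c + 2 := ⟨n - (c + 2), by omega⟩
  have e1 : N + c + 2 - 2 + 1 - (c + 1) = N := by omega
  have e2 : N + c + 2 - 1 + 1 - (c + 1 + 1) = N := by omega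
  have e3 : N + c + 2 + 1 - (c + 1) - 1 = N + 1 := by omega
  have e4 : N + c + 2 + 1 - (c + 1) - 2 - j = N - j := by omega
  have e5 : N + c + 2 - (c + 1) - 1 = N := by omega
  have hmul : j + c + 1 ≤ N → N.choose (c + 1 + j) * (c + 1 + j).choose (c + 1) =
      N.choose j * (N - j).choose (c + 1) := by
    intro h
    have := Nat.choose_mul (n := N) (k := c + 1 + j) (s := j) (by omega)
    rw [Nat.add_sub_cancel] at this
    rw [← this, Nat.choose_symm_add]
  simp only [ww, pp, yy, e1, e2, e3, e4, e5]
  rcases j with _ | j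
  · have h0 := hmul (by omega)
    rw [if_neg (Nat.succ_ne_zero c), if_pos rfl, if_pos (by omega)]
    simp at h0 ⊢
  · have e6 : N + c + 2 - (c + 1) - 2 - j = N - (j + 1) := by omega
    have e7 : c + 1 + 1 + j = c + j + 1 + 1 := by omega
    have e8 : c + 1 + (j + 1) - 1 = c + j + 1 := by omega
    have e9 : c + 1 + (j + 1) = c + j + 1 + 1 := by omega
    have e10 : j + 1 - 1 = j := by omega
    have e11 : c + 1 - 1 = c := by omega
    have e12 : c + 1 + 1 - 1 = c + 1 := by omega
    rw [e9] at hmul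
    simp only [e10]
    simp only [e7, e9]
    rw [e6, e11, e12, show c + j + 1 + 1 - 1 = c + j + 1 from rfl]
    have hp : (c + j + 1 + 1).choose (c + 1) = (c + j + 1).choose c + (c + j + 1).choose (c + 1) :=
      Nat.choose_succ_succ _ _
    simp only [Nat.add_eq_zero_iff, one_ne_zero, and_false, if_false]
    by_cases h1 : j + 1 + 2 * (c + 1) + 2 ≤ N + c + 2 + 1
    · have h2 := hmul (by omega)
      rw [hp] at h2
      rw [if_pos h1, if_pos (by omega), Nat.choose_succ_succ N j, add_mul, ← h2]
      ring
    · rw [if_neg h1, if_neg (by omega), Nat.choose_eq_zero_of_lt (show N < c + j + 1 + 1 by omega)]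
      by_cases h2 : j + 1 + 2 * (c + 1) + 1 = N + c + 2 + 1
      · rw [if_pos h2, if_pos (by omega)]; simp
      · rw [if_neg h2, if_neg (by omega)]; simp

lemma ww_step (b n j : ℕ) (hb : 1 ≤ b) (hn : 2 * b + 1 ≤ n) :
    pp (b + 1) n j + pp b (n - 2) j + (if j = 0 then 0 else ww b n (j - 1)) = ww b (n + 1) j := by
  rw [add_assoc, yy_step b n j hb hn]
  rfl

end

section
variable {k : Type} [Field k] {m : ℕ}

/-- support of an exponent vector -/
def sup' (α : Fin m →₀ ℕ) (t : ℕ) : Prop := ∃ h : t < m, α ⟨t, h⟩ ≠ 0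

lemma sup_mono {α β : Fin m →₀ ℕ} (h : α ≤ β) (t : ℕ) (ht : sup' α t) : sup' β t := by
  obtain ⟨h1, h2⟩ := ht
  have := h ⟨t, h1⟩
  exact ⟨h1, by omega⟩

lemma sup_single {α : Fin m →₀ ℕ} {i : Fin m} {t : ℕ} (hne : t ≠ i.val)
    (ht : sup' (α + Finsupp.single i 1) t) : sup' α t := by
  obtain ⟨h1, h2⟩ := ht
  refine ⟨h1, ?_⟩
  rwa [Finsupp.add_apply, Finsupp.single_eq_of_ne, add_zero] at h2
  intro h
  exact hne (congrArg Fin.val h)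

lemma up_ind (o L b : ℕ) : Up (fun α : Fin m →₀ ℕ => ind (sup' α) o L b) :=
  fun _ _ h hi => ind_dep (fun t _ => sup_mono h t) hi

lemma up_sup_and {U : (Fin m →₀ ℕ) → Prop} (hU : Up U) (t : ℕ) : Up (fun α => sup' α t ∧ U α) :=
  fun _ _ h hi => ⟨sup_mono h t hi.1, hU _ _ h hi.2⟩

lemma up_W (b n : ℕ) : Up (fun α : Fin m →₀ ℕ => W (sup' α) b n) :=
  fun _ _ h hi => ⟨up_ind _ _ _ _ _ h hi.1, up_ind _ _ _ _ _ h hi.2⟩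

lemma RU.shift' {lin : Prop} {n p : ℕ} {β : ℕ → ℕ} {U : (Fin m →₀ ℕ) → Prop} (t : ℕ) (ht : t < m)
    (hU : Up U) (hi : ∀ α α' : Fin m →₀ ℕ, (∀ u, u < t → sup' α u → sup' α' u) → U α → U α')
    (r : RU k lin n β p U) :
    RU k lin n β (p + 1) (fun α => sup' α t ∧ U α) := by
  refine (RU.shift ⟨t, ht⟩ hU ?_ r).congr (fun _ => rfl) ?_
  · intro α
    exact hi _ _ fun u hu h => sup_single (by simpa using hu.ne) h
  · intro α
    exact and_congr_left fun _ => ⟨fun h => ⟨ht, h⟩, fun h => h.2⟩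

lemma RU_ind (L : ℕ) : ∀ o b, o + L ≤ m →
    RU k True (L + 1) (pp b L) b (fun α : Fin m →₀ ℕ => ind (sup' α) o L b) := by
  induction L using Nat.strong_induction_on with
  | _ L ih =>
  intro o b hL
  rcases b with _ | b
  · refine (RU.mono (RU.top (fun α => ind_zero _ _ _)) (by omega)).congr ?_ fun α => Iff.rfl
    intro i; simp [pp]
  · rcases L with _ | L
    · refine (RU.bot ?_).congr ?_ fun α => Iff.rfl
      · intro α h
        have := ind_len h
        omega
      · intro i
        simp only [pp]
        rw [Nat.choose_eq_zero_of_lt (by omega)]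
        simp
    · have r1 := ih L (by omega) o (b + 1) (by omega)
      have r2 := ih (L - 1) (by omega) o b (by omega)
      have s1 := r1.shift' (o + L) (by omega) (up_ind _ _ _) (fun α α' h => ind_dep h)
      have s2 := r2.shift' (o + L) (by omega) (up_ind _ _ _)
        (fun α α' h => ind_dep fun t ht => h t (by omega))
      refine (RU.mv (up_ind _ _ _) (up_sup_and (up_ind _ _ _) _) (r1.mono (by omega))
        (s2.mono (by omega)) s1 ?_ ?_).congr (pp_step b L) fun α => Iff.rfl
      · intro α
        constructor
        · rintro ⟨h1, h2, h3⟩; exact ⟨h2, h1⟩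
        · rintro ⟨h1, h2⟩; exact ⟨h2, h1, ind_pred h2⟩
      · intro α
        exact (ind_step _ _ _ _).symm

lemma RU_all (T : ℕ) (hT : T ≤ m) :
    RU k True 1 (fun i => if i = 0 then 1 else 0) T
      (fun α : Fin m →₀ ℕ => ∀ t < T, sup' α t) := by
  induction T with
  | zero => exact RU.top (fun α t ht => by omega)
  | succ T ih =>
    refine ((ih (by omega)).shift' T (by omega) ?_ ?_).congr (fun _ => rfl) ?_
    · intro α β h hh t ht; exact sup_mono h t (hh t ht)
    · intro α α' h hh t ht; exact h t ht (hh t ht)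
    · intro α
      constructor
      · rintro ⟨h1, h2⟩ t ht
        rcases Nat.lt_succ_iff_lt_or_eq.1 ht with h | rfl
        · exact h2 t h
        · exact h1
      · intro h
        exact ⟨h T (by omega), fun t ht => h t (by omega)⟩

lemma RU_W (b : ℕ) (hb : 1 ≤ b) (n : ℕ) (hn : 2 * b + 1 ≤ n) : n ≤ m →
    RU k False (n + 1) (ww b n) (b + 1) (fun α : Fin m →₀ ℕ => W (sup' α) b n) := by
  induction n, hn using Nat.le_induction with
  | base =>
    intro hm
    exact (((RU_all (2 * b + 1) hm).weaken (by omega)).mono (by omega)).congr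
      (fun i => (ww_base b i).symm) fun α => W_base.symm
  | succ n hn ih =>
    intro hm
    have r1 := RU_ind (k := k) (m := m) n 0 (b + 1) (by omega)
    have r2 := RU_ind (k := k) (m := m) (n - 2) 1 b (by omega)
    have s2 := r2.shift' n (by omega) (up_ind _ _ _)
        (fun α α' h => ind_dep fun t ht => h t (by omega))
    have s3 := (ih (by omega)).shift' n (by omega) (up_W _ _)
        (fun α α' h hh => ⟨ind_dep (fun t ht => h t (by omega)) hh.1,
          ind_dep (fun t ht => h t (by omega)) hh.2⟩)
    refine (RU.mv (up_ind _ _ _) (up_sup_and (up_ind _ _ _) _) (r1.mono (by omega))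
        (s2.mono (by omega)) s3 ?_ ?_).congr (fun i => ww_step b n i hb hn) fun α => Iff.rfl
    · intro α
      constructor
      · rintro ⟨h1, h2, h3⟩; exact ⟨h2, h1, h3⟩
      · rintro ⟨h1, h2, h3⟩; exact ⟨h2, h1, h3⟩
    · intro α
      exact (W_step hn).symm

end
end BC

namespace BC
open MvPolynomial

section
variable {k : Type} [Field k] {m : ℕ}

lemma ind_of_seq (s : ℕ → Prop) (o : ℕ) (t : ℕ → ℕ) (b : ℕ) : ∀ L, (∀ j ≤ b, s (t j - 1)) →
    (∀ j ≤ b, o + 1 ≤ t j) → (∀ j, j + 1 ≤ b → t j + 2 ≤ t (j + 1)) → t b ≤ o + L →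
    ind s o L (b + 1) := by
  induction b with
  | zero =>
    intro L h1 h2 h3 h4
    have h5 := h2 0 le_rfl
    rw [ind_succ]
    refine ⟨t 0 - 1 - o, by omega, ?_, ind_zero _ _ _⟩
    rw [show o + (t 0 - 1 - o) = t 0 - 1 by omega]
    exact h1 0 le_rfl
  | succ b ih =>
    intro L h1 h2 h3 h4
    have h5 := h2 (b + 1) le_rfl
    have h6 := h2 b (by omega)
    have h7 := h3 b le_rfl
    rw [ind_succ]
    refine ⟨t (b + 1) - 1 - o, by omega, ?_, ?_⟩
    · rw [show o + (t (b + 1) - 1 - o) = t (b + 1) - 1 by omega]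
      exact h1 _ le_rfl
    · exact ih _ (fun j hj => h1 j (by omega)) (fun j hj => h2 j (by omega))
        (fun j hj => h3 j (by omega)) (by omega)

lemma seq_of_ind (o : ℕ) (b : ℕ) : ∀ (L : ℕ) (α : Fin m →₀ ℕ), ind (sup' α) o L (b + 1) →
    ∃ t : ℕ → ℕ, o + 1 ≤ t 0 ∧ t b ≤ o + L ∧ (∀ j, j + 1 < b + 1 → t j + 2 ≤ t (j + 1)) ∧
      (∏ j ∈ Finset.range (b + 1), Xv k m (t j)) ∣ monomial α (1 : k) := by
  have hX : ∀ (u : ℕ) (hu : u < m) (α : Fin m →₀ ℕ), α ⟨u, hu⟩ ≠ 0 →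
      monomial α (1 : k) = monomial (α - Finsupp.single ⟨u, hu⟩ 1) 1 * Xv k m (u + 1) := by
    intro u hu α h
    have : Xv k m (u + 1) = X ⟨u, hu⟩ := by
      rw [Xv, dif_pos ⟨by omega, by omega⟩]; rfl
    rw [this, X, monomial_mul, tsub_add_cancel_of_le, one_mul]
    rw [Finsupp.single_le_iff]
    omega
  induction b with
  | zero =>
    intro L α h
    rw [ind_succ] at h
    obtain ⟨u, h1, ⟨h2, h3⟩, _⟩ := h
    refine ⟨fun _ => o + u + 1, by dsimp only; omega, by dsimp only; omega, fun j hj => by omega, ?_⟩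
    rw [hX _ h2 α h3]
    simp
  | succ b ih =>
    intro L α h
    rw [ind_succ] at h
    obtain ⟨u, h1, ⟨h2, h3⟩, h4⟩ := h
    have hl := ind_len h4
    have h5 : ind (sup' (α - Finsupp.single ⟨o + u, h2⟩ 1)) o (u - 1) (b + 1) := by
      refine ind_dep ?_ h4
      rintro t ht ⟨g1, g2⟩
      refine ⟨g1, ?_⟩
      rw [Finsupp.tsub_apply, Finsupp.single_eq_of_ne, tsub_zero]
      · exact g2
      · intro h
        have := congrArg Fin.val h
        simp at this
        omega
    obtain ⟨t, t1, t2, t3, t4⟩ := ih _ _ h5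
    refine ⟨fun j => if j ≤ b then t j else o + u + 1, by simpa using t1, ?_, ?_, ?_⟩
    · simp; omega
    · intro j hj
      by_cases h : j + 1 ≤ b
      · simp only [if_pos h, if_pos (show j ≤ b by omega)]
        exact t3 j (by omega)
      · obtain rfl : j = b := by omega
        simp
        omega
    · rw [Finset.prod_range_succ, hX _ h2 α h3]
      apply mul_dvd_mul
      · rw [Finset.prod_congr rfl (g := fun j => Xv k m (t j))]
        · exact t4
        · intro j hj
          rw [Finset.mem_range] at hj
          dsimp only
          rw [if_pos (by omega)]
      · simp

lemma idealI_eq (b o L : ℕ) (h : o + L ≤ m) :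
    idealI k m (b + 1) (o + 1) (o + L) = MI k (fun α => ind (sup' α) o L (b + 1)) := by
  classical
  apply le_antisymm
  · rw [idealI, Ideal.span_le]
    rintro f ⟨t, h1, h2, h3, rfl⟩
    rw [Nat.add_sub_cancel] at h2
    have hlow : ∀ j ≤ b, o + 1 ≤ t j := by
      intro j
      induction j with
      | zero => intro _; exact h1
      | succ j ih => intro hj; have := ih (by omega); have := h3 j (by omega); omega
    have hup : ∀ j ≤ b, t j ≤ o + L := by
      intro j hj
      refine Nat.decreasingInduction (motive := fun j _ => t j ≤ o + L) ?_ h2 hj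
      intro j hj ih
      have := h3 j (by omega)
      omega
    rw [SetLike.mem_coe, mem_MI (up_ind _ _ _)]
    intro α ha
    refine ind_of_seq _ o t b L ?_ hlow (fun j hj => h3 j (by omega)) h2
    intro j hj
    have j1 := hlow j hj
    have j2 := hup j hj
    obtain ⟨g, hg⟩ := Finset.dvd_prod_of_mem (fun j => Xv k m (t j))
      (Finset.mem_range.2 (show j < b + 1 by omega))
    have : Xv k m (t j) = X ⟨t j - 1, by omega⟩ := by
      rw [Xv, dif_pos ⟨by omega, by omega⟩]
    rw [hg, this, mem_support_iff, coeff_X_mul'] at ha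
    split_ifs at ha with h6
    · exact ⟨by omega, Finsupp.mem_support_iff.1 h6⟩
    · exact absurd rfl ha
  · rw [MI, Ideal.span_le]
    rintro _ ⟨α, ha, rfl⟩
    obtain ⟨t, t1, t2, t3, t4⟩ := seq_of_ind (k := k) o b L α ha
    exact Ideal.mem_of_dvd _ t4 (Ideal.subset_span ⟨t, t1, t2, t3, rfl⟩)

end
end BC

namespace BC
open MvPolynomial

section
variable {k : Type} [Field k] {m : ℕ}

/-- `M` has a minimal free resolution with ranks `β` -/
def ResC (k : Type) [Field k] (m : ℕ) (M : Type) [AddCommGroup M] [Module (MvPolynomial (Fin m) k) M]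
    (β : ℕ → ℕ) : Prop :=
  ∃ (ι : ℕ → Type) (_ : ∀ i, Fintype (ι i))
    (d : ∀ i, (ι (i + 1) → MvPolynomial (Fin m) k) →ₗ[MvPolynomial (Fin m) k]
      (ι i → MvPolynomial (Fin m) k))
    (ε : (ι 0 → MvPolynomial (Fin m) k) →ₗ[MvPolynomial (Fin m) k] M),
    (∀ i, Fintype.card (ι i) = β i) ∧ Function.Surjective ε ∧
    (∀ x, ε x = 0 ↔ ∃ y, d 0 y = x) ∧ (∀ i x, d i x = 0 ↔ ∃ y, d (i + 1) y = x) ∧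
    ∀ i x j, constantCoeff (d i x j) = 0

/-- prepend -/
def consT {T : Type 1} (a : T) (f : ℕ → T) : ℕ → T
  | 0 => a
  | i + 1 => f i

lemma ResC.cons {M N : Type} [AddCommGroup M] [Module (MvPolynomial (Fin m) k) M]
    [AddCommGroup N] [Module (MvPolynomial (Fin m) k) N] {ι : Type} [ft : Fintype ι]
    {β β' : ℕ → ℕ} (ε : (ι → MvPolynomial (Fin m) k) →ₗ[MvPolynomial (Fin m) k] M)
    (f : N →ₗ[MvPolynomial (Fin m) k] (ι → MvPolynomial (Fin m) k))
    (hε : Function.Surjective ε) (hf : Function.Injective f)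
    (hex : ∀ x, ε x = 0 ↔ ∃ y, f y = x) (hm : ∀ x j, constantCoeff (f x j) = 0)
    (hN : ResC k m N β') (h0 : Fintype.card ι = β 0) (h1 : ∀ i, β' i = β (i + 1)) :
    ResC k m M β := by
  obtain ⟨ι', ft', d, ε', hc, hs, hx, hx', hm'⟩ := hN
  refine ⟨consT ι ι', fun i => match i with
    | 0 => ft
    | i + 1 => ft' i, fun i => match i with
    | 0 => f.comp ε'
    | i + 1 => d i, ε, ?_, hε, ?_, ?_, ?_⟩
  · rintro (_ | i)
    · exact h0
    · exact (hc i).trans (h1 i)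
  · intro x
    refine (hex x).trans ?_
    constructor
    · rintro ⟨y, rfl⟩
      obtain ⟨z, rfl⟩ := hs y
      exact ⟨z, rfl⟩
    · rintro ⟨y, rfl⟩
      exact ⟨ε' y, rfl⟩
  · rintro (_ | i) x
    · refine Iff.trans ?_ (hx x)
      change f (ε' x) = 0 ↔ _
      exact map_eq_zero_iff f hf
    · exact hx' i x
  · rintro (_ | i) x j
    · exact hm (ε' x) j
    · exact hm' i x j

lemma Res.toC {lin : Prop} (n : ℕ) : ∀ (β : ℕ → ℕ) (p : ℕ) (M : Type) [AddCommGroup M]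
    [Module (MvPolynomial (Fin m) k) M] (G : Gr k m M), Res lin n β p M G → ResC k m M β := by
  induction n with
  | zero =>
    intro β p M _ _ G h
    obtain ⟨h1, h2⟩ := h
    refine ⟨fun _ => Empty, inferInstance, fun _ => 0, 0, fun i => by simp [h2], ?_, ?_, ?_, ?_⟩
    · intro x; exact ⟨0, Subsingleton.elim _ _⟩
    · intro x; exact ⟨fun _ => ⟨0, Subsingleton.elim _ _⟩, fun _ => Subsingleton.elim _ _⟩
    · intro i x; exact ⟨fun _ => ⟨0, Subsingleton.elim _ _⟩, fun _ => Subsingleton.elim _ _⟩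
    · intro i x j; exact j.elim
  | succ n ih =>
    intro β p M _ _ G h
    obtain ⟨ι, _, deg, e, hd, hc, hp, hs, hm, hr⟩ := h
    refine ResC.cons (lc e) (LinearMap.ker (lc (k := k) (m := m) e)).subtype hs
      Subtype.val_injective ?_ ?_ (ih _ _ _ _ hr) hc (fun i => rfl)
    · intro x
      exact ⟨fun h => ⟨⟨x, h⟩, rfl⟩, by rintro ⟨y, rfl⟩; exact y.2⟩
    · intro x j; exact hm _ x.2 j

lemma ResC.quot {I : Ideal (MvPolynomial (Fin m) k)} {β β' : ℕ → ℕ} (h : ResC k m I β')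
    (hI : ∀ x ∈ I, constantCoeff x = 0) (h0 : 1 = β 0) (h1 : ∀ i, β' i = β (i + 1)) :
    ResC k m (MvPolynomial (Fin m) k ⧸ I) β := by
  refine ResC.cons (ι := Unit)
    ((Submodule.mkQ I).comp (LinearMap.proj (R := MvPolynomial (Fin m) k) (φ := fun _ : Unit => MvPolynomial (Fin m) k) ()))
    (LinearMap.pi fun _ : Unit => I.subtype) ?_ ?_ ?_ ?_ h (by simpa using h0) h1
  · intro x
    obtain ⟨y, rfl⟩ := Submodule.mkQ_surjective I x
    exact ⟨fun _ => y, rfl⟩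
  · intro x y h
    ext1
    exact congrFun h ()
  · intro x
    change Submodule.Quotient.mk (x ()) = 0 ↔ _
    rw [Submodule.Quotient.mk_eq_zero]
    constructor
    · intro h; exact ⟨⟨x (), h⟩, rfl⟩
    · rintro ⟨y, rfl⟩; exact y.2
  · intro x j; exact hI _ x.2

lemma mem_maxIdl (r : MvPolynomial (Fin m) k) : r ∈ maxIdl k m ↔ constantCoeff r = 0 := by
  rw [maxIdl, ← Set.image_univ, mem_ideal_span_X_image]
  constructor
  · intro h
    by_contra h0
    obtain ⟨i, _, hi⟩ := h 0 (mem_support_iff.2 h0)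
    exact hi rfl
  · intro h α ha
    by_contra hh
    push Not at hh
    have : α = 0 := by ext i; exact hh i trivial
    subst this
    exact mem_support_iff.1 ha h

/-- the residue field -/
noncomputable def resEquiv (ι : Type) :
    RestrictScalars k (MvPolynomial (Fin m) k) (ι → MvPolynomial (Fin m) k ⧸ maxIdl k m) ≃ₗ[k]
      (ι → k) where
  toFun v i := Ideal.Quotient.lift (maxIdl k m) constantCoeff (fun a ha => (mem_maxIdl a).1 ha)
    ((show ι → MvPolynomial (Fin m) k ⧸ maxIdl k m from v) i)
  invFun w := (show ι → MvPolynomial (Fin m) k ⧸ maxIdl k m from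
    fun i => Ideal.Quotient.mk _ (MvPolynomial.C (w i)))
  map_add' v w := by
    funext i
    exact map_add _ _ _
  map_smul' a v := by
    funext i
    have : ∀ y : MvPolynomial (Fin m) k ⧸ maxIdl k m,
      Ideal.Quotient.lift (maxIdl k m) constantCoeff (fun a ha => (mem_maxIdl a).1 ha)
        ((MvPolynomial.C a : MvPolynomial (Fin m) k) • y) = a *
      Ideal.Quotient.lift (maxIdl k m) constantCoeff (fun a ha => (mem_maxIdl a).1 ha) y := by
      intro y
      obtain ⟨y, rfl⟩ := Ideal.Quotient.mk_surjective y
      change Ideal.Quotient.lift (maxIdl k m) constantCoeff _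
        (Ideal.Quotient.mk _ (MvPolynomial.C a * y)) = _
      rw [Ideal.Quotient.lift_mk, Ideal.Quotient.lift_mk, map_mul, constantCoeff_C]
    exact this _
  left_inv v := by
    funext i
    obtain ⟨y, hy⟩ := Ideal.Quotient.mk_surjective
      ((show ι → MvPolynomial (Fin m) k ⧸ maxIdl k m from v) i)
    dsimp only
    refine Eq.trans ?_ hy
    rw [← hy, Ideal.Quotient.lift_mk, Ideal.Quotient.eq, mem_maxIdl]
    simp
  right_inv w := by
    funext i
    dsimp only
    rw [Ideal.Quotient.lift_mk]
    simp

lemma rank_of_equiv {A : Type} [AddCommGroup A] [Module (MvPolynomial (Fin m) k) A] {ι : Type}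
    [Fintype ι] (e : A ≃ₗ[MvPolynomial (Fin m) k] (ι → MvPolynomial (Fin m) k ⧸ maxIdl k m)) :
    Module.rank k (RestrictScalars k (MvPolynomial (Fin m) k) A) = Fintype.card ι := by
  let e' : RestrictScalars k (MvPolynomial (Fin m) k) A ≃ₗ[k]
    RestrictScalars k (MvPolynomial (Fin m) k) (ι → MvPolynomial (Fin m) k ⧸ maxIdl k m) :=
    { toFun := fun x => e x
      invFun := fun x => e.symm x
      map_add' := fun x y => e.map_add x y
      map_smul' := fun a x => e.map_smul (algebraMap k (MvPolynomial (Fin m) k) a) x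
      left_inv := e.left_inv
      right_inv := e.right_inv }
  rw [(e'.trans (resEquiv ι)).rank_eq]
  simp

end
end BC

namespace BC
open MvPolynomial

section
variable {k : Type} [Field k] {m : ℕ}

lemma ResC.projRes {M : Type} [AddCommGroup M] [Module (MvPolynomial (Fin m) k) M]
    {β : ℕ → ℕ} (h : ResC k m M β) :
    ∃ (P : ProjectiveResolution (ModuleCat.of (MvPolynomial (Fin m) k) M))
      (ι : ℕ → Type) (_ : ∀ i, Fintype (ι i)), (∀ i, Fintype.card (ι i) = β i) ∧
      ∃ (e : ∀ i, P.complex.X i ≅ ModuleCat.of (MvPolynomial (Fin m) k)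
        (ι i → MvPolynomial (Fin m) k)),
      ∀ i j x t, constantCoeff ((e j).hom (P.complex.d i j x) t) = 0 := by
  obtain ⟨ι, _, d, ε, hc, hs, hx, hx', hm⟩ := h
  let X : ℕ → ModuleCat (MvPolynomial (Fin m) k) := fun i =>
    ModuleCat.of (MvPolynomial (Fin m) k) (ι i → MvPolynomial (Fin m) k)
  let D : ∀ i, X (i + 1) ⟶ X i := fun i => ModuleCat.ofHom (d i)
  have sq : ∀ i, D (i + 1) ≫ D i = 0 := by
    intro i
    ext1
    refine LinearMap.ext fun x => ?_
    exact (hx' i _).2 ⟨x, rfl⟩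
  let K : ChainComplex (ModuleCat (MvPolynomial (Fin m) k)) ℕ := ChainComplex.of X D sq
  have hK : ∀ i, K.d (i + 1) i = D i := fun i => ChainComplex.of_d _ _ _
  let E : K.X 0 ⟶ ModuleCat.of (MvPolynomial (Fin m) k) M := ModuleCat.ofHom ε
  have hE : K.d 1 0 ≫ E = 0 := by
    rw [hK 0]
    ext1
    refine LinearMap.ext fun x => ?_
    exact (hx _).2 ⟨x, rfl⟩
  have hepi : Epi E := (ModuleCat.epi_iff_surjective E).2 hs
  have hex0 : (ShortComplex.mk (K.d 1 0) E hE).Exact := by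
    rw [ShortComplex.moduleCat_exact_iff]
    intro x hxx
    obtain ⟨y, hy⟩ := (hx x).1 hxx
    refine ⟨y, ?_⟩
    change K.d 1 0 y = x
    rw [hK 0]
    exact hy
  have hexS : ∀ n, K.ExactAt (n + 1) := by
    intro n
    rw [HomologicalComplex.exactAt_iff' _ (n + 1 + 1) (n + 1) n (by simp) (by simp)]
    rw [ShortComplex.moduleCat_exact_iff]
    intro x hxx
    change K.d (n + 1) n x = 0 at hxx
    rw [hK n] at hxx
    obtain ⟨y, hy⟩ := (hx' n x).1 hxx
    refine ⟨y, ?_⟩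
    change K.d (n + 1 + 1) (n + 1) y = x
    rw [hK (n + 1)]
    exact hy
  let P : ProjectiveResolution (ModuleCat.of (MvPolynomial (Fin m) k) M) :=
    { complex := K
      projective := fun n => by
        change Projective (ModuleCat.of (MvPolynomial (Fin m) k) (ι n → MvPolynomial (Fin m) k))
        infer_instance
      π := (ChainComplex.toSingle₀Equiv _ _).symm ⟨E, hE⟩
      quasiIso := ⟨fun n => by
        cases n
        · rw [ChainComplex.quasiIsoAt₀_iff, ShortComplex.quasiIso_iff_of_zeros']
          · refine (ShortComplex.exact_and_epi_g_iff_of_iso ?_).2 ⟨hex0, hepi⟩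
            exact ShortComplex.isoMk (Iso.refl _) (Iso.refl _) (Iso.refl _)
              ((Category.id_comp _).trans (Category.comp_id _).symm)
              ((Category.id_comp _).trans (Category.comp_id _).symm)
          all_goals rfl
        · rw [quasiIsoAt_iff_exactAt']
          · apply hexS
          · apply ChainComplex.exactAt_succ_single_obj⟩ }
  refine ⟨P, ι, inferInstance, hc, fun i => Iso.refl _, ?_⟩
  intro i j x t
  change constantCoeff ((K.d i j x : ι j → MvPolynomial (Fin m) k) t) = 0
  by_cases hij : j + 1 = i
  · subst hij
    rw [hK j]
    exact hm j x t
  · rw [K.shape i j hij]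
    exact map_zero _

end
end BC

namespace BC
open MvPolynomial

section
variable {k : Type} [Field k] {m : ℕ}

open scoped MonoidalCategory in
lemma whisker_zero {A B : ModuleCat (MvPolynomial (Fin m) k)} (f : A ⟶ B) {ι : Type} [Fintype ι]
    (e : B ≅ ModuleCat.of (MvPolynomial (Fin m) k) (ι → MvPolynomial (Fin m) k))
    (h : ∀ x t, constantCoeff (e.hom (f x) t) = 0) :
    (ModuleCat.of (MvPolynomial (Fin m) k) (MvPolynomial (Fin m) k ⧸ maxIdl k m)) ◁ f = 0 := by
  classical
  rw [← cancel_mono (_ ◁ e.hom), ← MonoidalCategory.whiskerLeft_comp, Limits.zero_comp]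
  ext1
  rw [ModuleCat.hom_whiskerLeft]
  refine TensorProduct.ext' fun q x => ?_
  change TensorProduct.tmul _ q (e.hom (f x)) = 0
  apply (TensorProduct.piScalarRight (MvPolynomial (Fin m) k) (MvPolynomial (Fin m) k)
    (MvPolynomial (Fin m) k ⧸ maxIdl k m) ι).injective
  rw [map_zero, TensorProduct.piScalarRight_apply]
  erw [TensorProduct.piScalarRightHom_tmul]
  funext t
  obtain ⟨y, rfl⟩ := Ideal.Quotient.mk_surjective q
  change Ideal.Quotient.mk (maxIdl k m) (e.hom (f x) t * y) = 0
  rw [Ideal.Quotient.eq_zero_iff_mem, mem_maxIdl, map_mul, h, zero_mul]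

lemma ResC.betti {M : Type} [AddCommGroup M] [Module (MvPolynomial (Fin m) k) M]
    {β : ℕ → ℕ} (h : ResC k m M β) (i : ℕ) :
    betti k m (ModuleCat.of (MvPolynomial (Fin m) k) M) i = (β i : Cardinal) := by
  classical
  obtain ⟨P, ι, _, hc, e, hd⟩ := h.projRes
  let F := (MonoidalCategory.tensoringLeft (ModuleCat (MvPolynomial (Fin m) k))).obj
    (ModuleCat.of (MvPolynomial (Fin m) k) (MvPolynomial (Fin m) k ⧸ maxIdl k m))
  have hz : ∀ a b, F.map (P.complex.d a b) = 0 := fun a b => whisker_zero _ (e b) (hd a b)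
  let K := (F.mapHomologicalComplex _).obj P.complex
  have hf : (K.sc i).f = 0 := hz _ _
  have hg : (K.sc i).g = 0 := hz _ _
  let i1 := P.isoLeftDerivedObj F i
  let i2 : (K.sc i).homology ≅ K.X i := (ShortComplex.HomologyData.ofZeros _ hf hg).left.homologyIso
  let i3 : K.X i ≅ F.obj (ModuleCat.of (MvPolynomial (Fin m) k) (ι i → MvPolynomial (Fin m) k)) :=
    F.mapIso (e i)
  let i4 : (F.leftDerived i).obj (ModuleCat.of (MvPolynomial (Fin m) k) M) ≅
    F.obj (ModuleCat.of (MvPolynomial (Fin m) k) (ι i → MvPolynomial (Fin m) k)) :=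
    i1 ≪≫ i2 ≪≫ i3
  rw [← hc i]
  exact rank_of_equiv (i4.toLinearEquiv.trans (TensorProduct.piScalarRight (MvPolynomial (Fin m) k)
    (MvPolynomial (Fin m) k) (MvPolynomial (Fin m) k ⧸ maxIdl k m) (ι i)))

end
end BC

namespace BC
open MvPolynomial

section
variable {k : Type} [Field k] {m : ℕ}

/-- the Betti numbers of the quotient -/
def bb (b n : ℕ) : ℕ → ℕ
  | 0 => 1
  | i + 1 => ww b n i

lemma main_betti (b : ℕ) (hb : 1 ≤ b) (hm : 2 * b + 1 < m) (i : ℕ) :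
    betti k m (ModuleCat.of (MvPolynomial (Fin m) k)
      (MvPolynomial (Fin m) k ⧸ (idealI k m (b + 1) 1 (m - 1) + idealI k m (b + 1) 2 m))) i =
      (bb b m i : Cardinal) := by
  have h1 : idealI k m (b + 1) 1 (m - 1) =
      MI k (fun α => ind (sup' α) 0 (m - 1) (b + 1)) := by
    have := idealI_eq (k := k) (m := m) b 0 (m - 1) (by omega)
    simpa using this
  have h2 : idealI k m (b + 1) 2 m =
      MI k (fun α => ind (sup' α) 1 (m - 1) (b + 1)) := by
    have := idealI_eq (k := k) (m := m) b 1 (m - 1) (by omega)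
    rwa [show 1 + (m - 1) = m by omega] at this
  have h3 : idealI k m (b + 1) 1 (m - 1) + idealI k m (b + 1) 2 m =
      MI k (fun α => W (sup' α) b m) := by
    rw [h1, h2, Submodule.add_eq_sup, MI_sup]
    congr 1
    funext α
    have := J_iff (s := sup' α) (b := b) (n := m - 1) (by omega)
    rw [show m - 1 + 1 = m by omega] at this
    exact propext this.symm
  rw [h3]
  obtain ⟨hh, hr⟩ := RU_W (k := k) (m := m) b hb m (by omega) le_rfl
  refine ResC.betti (ResC.quot (Res.toC _ _ _ _ _ hr) ?_ rfl fun i => rfl) i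
  intro x hx
  by_contra h0
  have := (mem_MI (up_W b m) x).1 hx 0 (mem_support_iff.2 h0)
  have h4 := this.1
  rw [ind_succ] at h4
  obtain ⟨t, _, ⟨_, ht⟩, _⟩ := h4
  exact ht rfl

end
end BC

theorem betti_cyclic_even (k : Type) [Field k] (d m : ℕ)
    (hd : Even d) (hd2 : 2 ≤ d) (hm : d + 1 < m) (a : ℕ) (ha : a = (d + 2) / 2)
    (M : ModuleCat (MvPolynomial (Fin m) k))
    (hM : M = ModuleCat.of (MvPolynomial (Fin m) k)
      (MvPolynomial (Fin m) k ⧸ (idealI k m a 1 (m - 1) + idealI k m a 2 m))) :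
    betti k m M 0 = 1 ∧
    betti k m M (m - d) = 1 ∧
    (∀ i, m - d < i → betti k m M i = 0) ∧
    (∀ i, 1 ≤ i → i ≤ m - d - 1 →
      betti k m M i = ((eta (d + 1) (m + 1) i + eta (d + 1) (m + 1) (m - d - i) : ℕ) :
        Cardinal)) := by
  obtain ⟨b, rfl⟩ := hd
  obtain rfl : a = b + 1 := by omega
  subst hM
  have key := BC.main_betti (k := k) (m := m) b (by omega) (by omega)
  have e1 : m - 1 + 1 - (b + 1) = m - b - 1 := by omega
  refine ⟨?_, ?_, ?_, ?_⟩
  · rw [key]; simp [BC.bb]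
  · rw [key, show m - (b + b) = (m - (b + b) - 1) + 1 by omega]
    simp only [BC.bb, BC.ww, BC.pp, BC.yy, e1]
    rw [if_neg (by omega), if_neg (by omega), if_pos (by omega),
      Nat.choose_eq_zero_of_lt (by omega)]
    simp
  · intro i hi
    obtain ⟨i, rfl⟩ : ∃ j, i = j + 1 := ⟨i - 1, by omega⟩
    rw [key]
    simp only [BC.bb, BC.ww, BC.pp, BC.yy, e1]
    rw [if_neg (by omega), if_neg (by omega), if_neg (by omega),
      Nat.choose_eq_zero_of_lt (by omega)]
    simp
  · intro i hi1 hi2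
    obtain ⟨i, rfl⟩ : ∃ j, i = j + 1 := ⟨i - 1, by omega⟩
    rw [key]
    congr 1
    simp only [BC.bb, BC.ww, BC.pp, BC.yy, eta, e1]
    rw [if_neg (by omega), if_pos (by omega), if_pos (by omega), if_pos (by omega)]
    rw [show (b + b + 1) / 2 = b by omega, show m + 1 - b - 2 = m - b - 1 by omega,
      show b + 1 + i = b + (i + 1) by omega, show b + 1 - 1 = b by omega,
      show b + (m - (b + b) - (i + 1)) = m - b - 1 - i by omega,
      Nat.choose_symm (by omega), show m - b - 2 - i = m - b - 1 - i - 1 by omega]
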